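/- If continuous real-valued functions are dense in N¹X with respect to the quasi-seminorm ‖·‖_{N¹X}, then every u ∈ N¹X has a quasi-continuous representative ũ ∈ N¹X with ũ = u quasi-everywhere; in particular, every u ∈ N¹X is weakly quasi-continuous. -/

import Mathlib

/-!
Call `(w, g)` an upper gradient pair if `w` and `g` are measurable, nonnegative and satisfy
`w (γ 0) ≤ w (γ l) + ∫_γ g` along every curve. If `v` has the upper gradient `g`, then `(|v|, g)` is
such a pair, so the capacity of `E` is governed by pairs with `w ≥ 1` on `E`; and pairs are stable
under countable sums, with no finiteness requirement. With the Riesz–Fischer property this gives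

* quasi-subadditivity, `C_X(⋃ E k) ≤ ∑ c ^ (k + 1) C_X(E k)`, and the Chebyshev inequality
  `C_X({t ≤ |v|}) ≤ t⁻¹ ‖v‖_{N¹X}`;
* for `C_X(E) = 0`, a pair `(w, g)` of finite quasi-norms with `w = ∞` on `E`. As `w` is finite
  almost everywhere, `g + ∞ · 1_{w = ∞}` still has finite quasi-norm, while its integral over every
  curve ending in `E` is infinite. Hence changing a function quasi-everywhere does not affect
  membership in `N¹X`.

Choose continuous `f k` so close to `u` that the sets `{2⁻ᵏ ≤ |u - f k|}` have summable weighted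
capacities. Then `f k → u` uniformly off sets `E` of arbitrarily small capacity. A sequence of
continuous functions that is uniformly Cauchy on `Eᶜ` is uniformly Cauchy on its closure, so the
limit is continuous off the open set `interior E`.
-/

open MeasureTheory Filter Set Topology Metric ENNReal

noncomputable section

/-- A (non-constant, rectifiable) curve in `P`, parametrized by arc length. -/
structure Curve (P : Type*) [PseudoMetricSpace P] where
  len : ℝ
  len_pos : 0 < len
  toFun : ℝ → P
  lip : LipschitzOnWith 1 toFun (Set.Icc 0 len)

variable {P : Type*}

/-- The curve integral `∫_γ ρ ds`. -/
def curveLint [PseudoMetricSpace P] (γ : Curve P) (ρ : P → ℝ≥0∞) : ℝ≥0∞ :=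
  ∫⁻ t in Set.Icc (0 : ℝ) γ.len, ρ (γ.toFun t)

/-- `g` is an upper gradient of `u`. -/
def IsUpperGradient [PseudoMetricSpace P] [MeasurableSpace P]
    (u : P → EReal) (g : P → ℝ≥0∞) : Prop :=
  Measurable g ∧
    ∀ γ : Curve P, (u (γ.toFun 0) - u (γ.toFun γ.len)).abs ≤ curveLint γ g

/-- A quasi-Banach function lattice over `(P, μ)` with continuous quasi-norm. -/
structure QBFL (P : Type*) [MeasurableSpace P] (μ : MeasureTheory.Measure P) where
  nrm : (P → EReal) → ℝ≥0∞
  cc : ℝ≥0∞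
  one_le_cc : 1 ≤ cc
  cc_lt_top : cc < ⊤
  nrm_eq_zero_iff : ∀ u : P → EReal, Measurable u → (nrm u = 0 ↔ u =ᵐ[μ] 0)
  nrm_smul : ∀ (a : ℝ) (u : P → EReal),
    nrm (fun x => (a : EReal) * u x) = ENNReal.ofReal |a| * nrm u
  nrm_triangle : ∀ u v : P → EReal,
    nrm (fun x => u x + v x) ≤ cc * (nrm u + nrm v)
  nrm_mono : ∀ u v : P → EReal, (∀ᵐ x ∂μ, (u x).abs ≤ (v x).abs) → nrm u ≤ nrm v
  nrm_rieszFischer : ∀ f : ℕ → P → EReal, (∀ n, ∀ᵐ x ∂μ, 0 ≤ f n x) →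
    nrm (fun x => ∑' n, f n x) ≤ ∑' n, cc ^ (n + 1) * nrm (f n)
  nrm_continuous : ∀ (f : ℕ → P → EReal) (u : P → EReal),
    Tendsto (fun n => nrm fun x => f n x - u x) atTop (𝓝 0) →
    Tendsto (fun n => nrm (f n)) atTop (𝓝 (nrm u))

variable [MetricSpace P] [MeasurableSpace P] {μ : MeasureTheory.Measure P}

/-- The quasi-norm applied to a `ℝ≥0∞`-valued function. -/
def QBFL.nrmE (X : QBFL P μ) (g : P → ℝ≥0∞) : ℝ≥0∞ :=
  X.nrm fun x => (g x : EReal)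

/-- The Newtonian quasi-seminorm `‖u‖_{N¹X}`. -/
def QBFL.newt (X : QBFL P μ) (u : P → EReal) : ℝ≥0∞ :=
  X.nrm u + ⨅ g ∈ {g : P → ℝ≥0∞ | IsUpperGradient u g}, X.nrmE g

/-- Membership in the Newtonian space `N¹X`. -/
def QBFL.memN1 (X : QBFL P μ) (u : P → EReal) : Prop :=
  Measurable u ∧ X.newt u < ⊤

/-- The Sobolev capacity `C_X`. -/
def QBFL.cap (X : QBFL P μ) (E : Set P) : ℝ≥0∞ :=
  ⨅ u ∈ {u : P → EReal | X.memN1 u ∧ ∀ x ∈ E, 1 ≤ u x}, X.newt u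


/-- `u` is weakly quasi-continuous: for every `ε > 0` there is a set `E` of capacity
less than `ε` such that the restriction of `u` to the complement of `E` is finite
and continuous. -/
def QBFL.WeaklyQC (X : QBFL P μ) (u : P → EReal) : Prop :=
  ∀ ε : ℝ≥0∞, 0 < ε → ∃ E : Set P, X.cap E < ε ∧
    (∀ x ∈ Eᶜ, u x ≠ ⊤ ∧ u x ≠ ⊥) ∧ ContinuousOn u Eᶜ

/-- `u` is quasi-continuous: the exceptional set can moreover be chosen open. -/
def QBFL.QC (X : QBFL P μ) (u : P → EReal) : Prop :=
  ∀ ε : ℝ≥0∞, 0 < ε → ∃ E : Set P, IsOpen E ∧ X.cap E < ε ∧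
    (∀ x ∈ Eᶜ, u x ≠ ⊤ ∧ u x ≠ ⊥) ∧ ContinuousOn u Eᶜ

section ExtendedReals

theorem measurable_ereal_abs : Measurable EReal.abs :=
  EReal.measurable_of_measurable_real (ENNReal.measurable_ofReal.comp measurable_norm)

theorem ereal_abs_coe_ennreal (a : ℝ≥0∞) : (a : EReal).abs = a := by
  induction a using ENNReal.recTopCoe with
  | top => rfl
  | coe a =>
    change ENNReal.ofReal |(a : ℝ)| = a
    rw [abs_of_nonneg a.coe_nonneg, ENNReal.ofReal_coe_nnreal]

theorem le_ereal_abs_of_coe_le {a : ℝ≥0∞} {x : EReal} (h : (a : EReal) ≤ x) : a ≤ x.abs := by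
  induction x using EReal.rec with
  | bot => simp
  | top => simp
  | coe r =>
    rw [← EReal.coe_ennreal_le_coe_ennreal_iff, EReal.coe_abs]
    exact h.trans (EReal.coe_le_coe_iff.2 (le_abs_self r))

theorem ereal_abs_coe_sub_coe (a b : ℝ) : ((a : EReal) - b).abs = edist a b := by
  rw [← EReal.coe_sub, EReal.abs_def, edist_dist, Real.dist_eq]

theorem ereal_coe_toReal_of_abs_sub_coe_ne_top {a : EReal} {r : ℝ} (h : (a - r).abs ≠ ⊤) :
    (a.toReal : EReal) = a := by
  induction a using EReal.rec <;> simp_all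

/-- At infinite values this relies on `|(±∞) - (±∞)| = ∞`. -/
theorem ereal_abs_le_abs_add_abs_sub (a b : EReal) : a.abs ≤ b.abs + (a - b).abs := by
  induction a using EReal.rec with
  | bot => simp
  | top => induction b using EReal.rec <;> simp
  | coe a =>
    induction b using EReal.rec with
    | bot => simp
    | top => simp
    | coe b =>
      have abs_eq_edist (r : ℝ) : (r : EReal).abs = edist r 0 := by
        simpa only [EReal.coe_zero, sub_zero] using ereal_abs_coe_sub_coe r 0
      rw [abs_eq_edist, abs_eq_edist, ereal_abs_coe_sub_coe, add_comm]
      exact edist_triangle a b 0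

theorem ereal_abs_coe_sub_coe_le {p q r : ℝ≥0∞} (hp : p ≠ ⊤) (hq : q ≠ ⊤)
    (hpq : p ≤ q + r) (hqp : q ≤ p + r) : ((p : EReal) - q).abs ≤ r := by
  lift p to NNReal using hp
  lift q to NNReal using hq
  change (((p : ℝ) : EReal) - ((q : ℝ) : EReal)).abs ≤ r
  induction r using ENNReal.recTopCoe with
  | top => exact le_top
  | coe r =>
    have hpq' : (p : ℝ) ≤ q + r := mod_cast hpq
    have hqp' : (q : ℝ) ≤ p + r := mod_cast hqp
    rw [ereal_abs_coe_sub_coe, edist_dist, ← ENNReal.ofReal_coe_nnreal, Real.dist_eq]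
    exact ENNReal.ofReal_le_ofReal (abs_sub_le_iff.2 ⟨by linarith, by linarith⟩)

theorem ereal_coe_ennreal_tsum {ι : Type*} (f : ι → ℝ≥0∞) :
    ((∑' i, f i : ℝ≥0∞) : EReal) = ∑' i, (f i : EReal) :=
  (ENNReal.summable.hasSum.map
    (⟨⟨(↑), EReal.coe_ennreal_zero⟩, EReal.coe_ennreal_add⟩ : ℝ≥0∞ →+ EReal)
    continuous_coe_ennreal_ereal).tsum_eq.symm

end ExtendedReals

section UniformConvergence

theorem uniformCauchySeqOn_closure {ι α β : Type*} [TopologicalSpace α] [UniformSpace β]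
    {F : ι → α → β} {l : Filter ι} {s : Set α} (hF : ∀ i, Continuous (F i))
    (h : UniformCauchySeqOn F l s) : UniformCauchySeqOn F l (closure s) := by
  intro V hV
  obtain ⟨W, ⟨hW, hWclosed⟩, hWV⟩ := uniformity_hasBasis_closed.mem_iff.1 hV
  filter_upwards [h W hW] with i hi x hx
  exact hWV <| closure_minimal (t := {y | (F i.1 y, F i.2 y) ∈ W}) hi
    (hWclosed.preimage ((hF i.1).prodMk (hF i.2))) hx

theorem ereal_finite_and_continuousOn {α : Type*} [TopologicalSpace α] {u : α → EReal}
    {F : α → ℝ} {s : Set α} (hF : ContinuousOn F s) (hu : ∀ x ∈ s, u x = F x) :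
    (∀ x ∈ s, u x ≠ ⊤ ∧ u x ≠ ⊥) ∧ ContinuousOn u s :=
  ⟨fun x hx => by simp [hu x hx], (continuous_coe_real_ereal.comp_continuousOn hF).congr hu⟩

theorem tendstoUniformlyOn_toReal {α : Type*} {u : α → EReal} {f : ℕ → α → ℝ} {s : Set α}
    {t : ℕ → ℝ≥0∞} (ht : Tendsto t atTop (𝓝 0))
    (h : ∀ᶠ k in atTop, ∀ x ∈ s, (u x - f k x).abs ≤ t k) :
    (∀ x ∈ s, ((u x).toReal : EReal) = u x) ∧
      TendstoUniformlyOn f (fun x => (u x).toReal) atTop s := by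
  have hfinite : ∀ x ∈ s, ((u x).toReal : EReal) = u x := by
    obtain ⟨k, hk, htk⟩ := (h.and (ht.eventually (gt_mem_nhds zero_lt_one))).exists
    exact fun x hx =>
      ereal_coe_toReal_of_abs_sub_coe_ne_top ((hk x hx).trans_lt (htk.trans one_lt_top)).ne
  refine ⟨hfinite, EMetric.tendstoUniformlyOn_iff.2 fun ε hε => ?_⟩
  filter_upwards [h, ht.eventually (gt_mem_nhds hε)] with k hk htk x hx
  rw [← ereal_abs_coe_sub_coe, hfinite x hx]
  exact (hk x hx).trans_lt htk

/-- The pointwise upper limit of a sequence of real functions. It serves as a limit function that is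
defined and measurable everywhere, also where the sequence diverges. -/
def upperLimit {α : Type*} (f : ℕ → α → ℝ) (x : α) : EReal :=
  limsup (fun k => (f k x : EReal)) atTop

theorem measurable_upperLimit {α : Type*} [MeasurableSpace α] {f : ℕ → α → ℝ}
    (hf : ∀ k, Measurable (f k)) : Measurable (upperLimit f) :=
  Measurable.limsup fun k => measurable_coe_real_ereal.comp (hf k)

theorem upperLimit_eq_of_tendsto {α : Type*} {f : ℕ → α → ℝ} {x : α} {a : ℝ}
    (h : Tendsto (fun k => f k x) atTop (𝓝 a)) : upperLimit f x = a :=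
  ((continuous_coe_real_ereal.tendsto a).comp h).limsup_eq

theorem exists_continuousOn_upperLimit_eq {α : Type*} [TopologicalSpace α] {f : ℕ → α → ℝ}
    {s : Set α} (hf : ∀ k, Continuous (f k)) (h : UniformCauchySeqOn f atTop s) :
    ∃ F : α → ℝ, ContinuousOn F s ∧ ∀ x ∈ s, upperLimit f x = F x := by
  have hlim : ∀ x ∈ s, ∃ a, Tendsto (fun k => f k x) atTop (𝓝 a) := fun x hx =>
    cauchySeq_tendsto_of_complete (h.cauchySeq hx)
  choose! F hF using hlim
  exact ⟨F, (h.tendstoUniformlyOn_of_tendsto hF).continuousOn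
    (Frequently.of_forall fun k => (hf k).continuousOn),
    fun x hx => upperLimit_eq_of_tendsto (hF x hx)⟩

end UniformConvergence

section Curves

variable {P : Type*} [PseudoMetricSpace P]

/-- The initial piece of a curve, of length `t`. -/
def Curve.initial (γ : Curve P) {t : ℝ} (ht : t ∈ Ioc 0 γ.len) : Curve P where
  len := t
  len_pos := ht.1
  toFun := γ.toFun
  lip := γ.lip.mono (Icc_subset_Icc_right ht.2)

/-- The curve run backwards. -/
def Curve.reverse (γ : Curve P) : Curve P where
  len := γ.len
  len_pos := γ.len_pos
  toFun t := γ.toFun (γ.len - t)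
  lip s hs t ht := by
    have h := γ.lip (x := γ.len - s) ⟨by linarith [hs.2], by linarith [hs.1]⟩
      (y := γ.len - t) ⟨by linarith [ht.2], by linarith [ht.1]⟩
    simpa only [edist_sub_left] using h

theorem Curve.reverse_zero (γ : Curve P) : γ.reverse.toFun 0 = γ.toFun γ.len :=
  congrArg γ.toFun (sub_zero _)

theorem Curve.reverse_len (γ : Curve P) : γ.reverse.toFun γ.reverse.len = γ.toFun 0 :=
  congrArg γ.toFun (sub_self _)

theorem curveLint_reverse (γ : Curve P) (ρ : P → ℝ≥0∞) :
    curveLint γ.reverse ρ = curveLint γ ρ := by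
  have h := (Measure.measurePreserving_sub_left (volume : Measure ℝ) γ.len)
    |>.setLIntegral_comp_preimage_emb
      (MeasurableEquiv.subLeft γ.len).measurableEmbedding
      (fun t => ρ (γ.toFun t)) (Icc 0 γ.len)
  simpa [curveLint, Curve.reverse] using h

theorem curveLint_initial_le (γ : Curve P) {t : ℝ} (ht : t ∈ Ioc 0 γ.len) (ρ : P → ℝ≥0∞) :
    curveLint (γ.initial ht) ρ ≤ curveLint γ ρ :=
  lintegral_mono_set (Icc_subset_Icc_right ht.2)

theorem curveLint_mono (γ : Curve P) {ρ σ : P → ℝ≥0∞} (h : ρ ≤ σ) :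
    curveLint γ ρ ≤ curveLint γ σ :=
  lintegral_mono fun _ => h _

theorem tsum_curveLint_le {ι : Type*} (γ : Curve P) (ρ : ι → P → ℝ≥0∞) :
    ∑' i, curveLint γ (ρ i) ≤ curveLint γ (fun x => ∑' i, ρ i x) := by
  classical
  have hsum (s : Finset ι) :
      ∑ i ∈ s, curveLint γ (ρ i) ≤ curveLint γ (fun x => ∑ i ∈ s, ρ i x) := by
    induction s using Finset.induction_on with
    | empty => simp
    | insert i s his ih =>
      simp only [Finset.sum_insert his]
      exact (add_le_add_right ih _).trans (le_lintegral_add _ _)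
  rw [ENNReal.tsum_eq_iSup_sum]
  exact iSup_le fun s => (hsum s).trans (curveLint_mono γ fun x => ENNReal.sum_le_tsum s)

theorem curveLint_eq_top_of_forall_eq_top (γ : Curve P) {ρ : P → ℝ≥0∞}
    (h : ∀ t ∈ Ioo 0 γ.len, ρ (γ.toFun t) = ⊤) : curveLint γ ρ = ⊤ := by
  refine top_le_iff.1 ?_
  calc (⊤ : ℝ≥0∞) = ∫⁻ _ in Ioo 0 γ.len, (⊤ : ℝ≥0∞) := by
        rw [setLIntegral_const, Real.volume_Ioo, ENNReal.top_mul]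
        simpa using γ.len_pos
    _ = ∫⁻ t in Ioo 0 γ.len, ρ (γ.toFun t) :=
        setLIntegral_congr_fun measurableSet_Ioo fun t ht => (h t ht).symm
    _ ≤ curveLint γ ρ := lintegral_mono_set Ioo_subset_Icc_self

end Curves

section UpperGradientPairs

variable {P : Type*} [PseudoMetricSpace P] [MeasurableSpace P]

/-- `g` is an upper gradient of the nonnegative function `w`, in a form without subtraction: the
reverse inequality follows by reversing the curve. Unlike `IsUpperGradient`, this imposes nothing on
curves along which `w` is infinite at both ends, which makes it stable under countable sums. -/
structure UpperGradientPair (w g : P → ℝ≥0∞) : Prop where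
  measurable_fun : Measurable w
  measurable_grad : Measurable g
  le_add_curveLint : ∀ γ : Curve P, w (γ.toFun 0) ≤ w (γ.toFun γ.len) + curveLint γ g

theorem IsUpperGradient.upperGradientPair_abs {u : P → EReal} {g : P → ℝ≥0∞}
    (hg : IsUpperGradient u g) (hu : Measurable u) :
    UpperGradientPair (fun x => (u x).abs) g where
  measurable_fun := measurable_ereal_abs.comp hu
  measurable_grad := hg.1
  le_add_curveLint γ := (ereal_abs_le_abs_add_abs_sub _ _).trans (add_le_add_right (hg.2 γ) _)

theorem IsUpperGradient.congr_of_curveLint_eq_top {u v : P → EReal} {g ρ : P → ℝ≥0∞}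
    (hg : IsUpperGradient u g) (hρ : Measurable ρ)
    (htop : ∀ γ : Curve P, v (γ.toFun 0) ≠ u (γ.toFun 0) ∨ v (γ.toFun γ.len) ≠ u (γ.toFun γ.len) →
      curveLint γ ρ = ⊤) : IsUpperGradient v (fun x => g x + ρ x) := by
  refine ⟨hg.1.add hρ, fun γ => ?_⟩
  by_cases h : v (γ.toFun 0) ≠ u (γ.toFun 0) ∨ v (γ.toFun γ.len) ≠ u (γ.toFun γ.len)
  · calc (v (γ.toFun 0) - v (γ.toFun γ.len)).abs ≤ curveLint γ ρ := (htop γ h).symm ▸ le_top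
      _ ≤ _ := curveLint_mono γ fun _ => le_add_self
  · obtain ⟨h0, hlen⟩ := not_or.1 h
    rw [not_not.1 h0, not_not.1 hlen]
    exact (hg.2 γ).trans (curveLint_mono γ fun _ => le_self_add)

namespace UpperGradientPair

variable {w g : P → ℝ≥0∞}

theorem const_mul (h : UpperGradientPair w g) (a : ℝ≥0∞) :
    UpperGradientPair (fun x => a * w x) (fun x => a * g x) where
  measurable_fun := h.measurable_fun.const_mul a
  measurable_grad := h.measurable_grad.const_mul a
  le_add_curveLint γ := calc
    a * w (γ.toFun 0) ≤ a * w (γ.toFun γ.len) + a * curveLint γ g := by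
      rw [← mul_add]
      gcongr
      exact h.le_add_curveLint γ
    _ ≤ _ := by
      gcongr
      exact lintegral_const_mul_le a _

theorem tsum {ι : Type*} [Countable ι] {w g : ι → P → ℝ≥0∞}
    (h : ∀ i, UpperGradientPair (w i) (g i)) :
    UpperGradientPair (fun x => ∑' i, w i x) (fun x => ∑' i, g i x) where
  measurable_fun := Measurable.tsum fun i => (h i).measurable_fun
  measurable_grad := Measurable.tsum fun i => (h i).measurable_grad
  le_add_curveLint γ := calc
    ∑' i, w i (γ.toFun 0) ≤ ∑' i, (w i (γ.toFun γ.len) + curveLint γ (g i)) :=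
      ENNReal.tsum_le_tsum fun i => (h i).le_add_curveLint γ
    _ ≤ _ := by
      rw [ENNReal.tsum_add]
      gcongr
      exact tsum_curveLint_le γ g

theorem isUpperGradient_min_one (h : UpperGradientPair w g) :
    IsUpperGradient (fun x => (min 1 (w x) : ℝ≥0∞)) g := by
  have hle (γ : Curve P) :
      min 1 (w (γ.toFun 0)) ≤ min 1 (w (γ.toFun γ.len)) + curveLint γ g := by
    rw [min_add]
    exact min_le_min le_self_add (h.le_add_curveLint γ)
  refine ⟨h.measurable_grad, fun γ => ereal_abs_coe_sub_coe_le ?_ ?_ (hle γ) ?_⟩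
  · exact ne_top_of_le_ne_top one_ne_top (min_le_left _ _)
  · exact ne_top_of_le_ne_top one_ne_top (min_le_left _ _)
  · simpa only [γ.reverse_zero, γ.reverse_len, curveLint_reverse] using hle γ.reverse

/-- Either `w = ∞` along the whole curve, or the curve reaches a point where `w` is finite, and then
the integral of `g` up to this point is infinite. -/
theorem curveLint_eq_top (h : UpperGradientPair w g) (γ : Curve P)
    (h0 : w (γ.toFun 0) = ⊤) :
    curveLint γ (fun x => g x + {y | w y = ⊤}.indicator (fun _ => ⊤) x) = ⊤ := by
  by_cases hw : ∀ t ∈ Ioo 0 γ.len, w (γ.toFun t) = ⊤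
  · exact curveLint_eq_top_of_forall_eq_top γ fun t ht => by simp [hw t ht]
  · push Not at hw
    obtain ⟨t, ht, hwt⟩ := hw
    let γ' := γ.initial (Ioo_subset_Ioc_self ht)
    have hγ' : curveLint γ' g = ⊤ :=
      (ENNReal.add_eq_top.1 (top_le_iff.1 (h0 ▸ h.le_add_curveLint γ'))).resolve_left hwt
    refine top_le_iff.1 (hγ'.ge.trans ?_)
    exact (curveLint_initial_le γ _ g).trans (curveLint_mono γ fun _ => le_self_add)

end UpperGradientPair

end UpperGradientPairs

namespace QBFL

section QuasiNorm

variable {P : Type*} [MeasurableSpace P] {μ : MeasureTheory.Measure P} (X : QBFL P μ)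

theorem nrmE_abs (v : P → EReal) : X.nrmE (fun x => (v x).abs) = X.nrm v :=
  le_antisymm
    (X.nrm_mono _ _ (Eventually.of_forall fun _ => (ereal_abs_coe_ennreal _).le))
    (X.nrm_mono _ _ (Eventually.of_forall fun _ => (ereal_abs_coe_ennreal _).ge))

theorem nrmE_mono {g h : P → ℝ≥0∞} (hgh : ∀ᵐ x ∂μ, g x ≤ h x) : X.nrmE g ≤ X.nrmE h := by
  refine X.nrm_mono _ _ ?_
  simpa only [ereal_abs_coe_ennreal] using hgh

theorem nrmE_add_le (g h : P → ℝ≥0∞) :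
    X.nrmE (fun x => g x + h x) ≤ X.cc * (X.nrmE g + X.nrmE h) := by
  simpa only [nrmE, EReal.coe_ennreal_add] using
    X.nrm_triangle (fun x => (g x : EReal)) (fun x => (h x : EReal))

theorem nrmE_const_mul {a : ℝ≥0∞} (ha : a ≠ ⊤) (g : P → ℝ≥0∞) :
    X.nrmE (fun x => a * g x) = a * X.nrmE g := by
  lift a to NNReal using ha
  have h := X.nrm_smul a (fun x => (g x : EReal))
  rw [abs_of_nonneg a.coe_nonneg, ENNReal.ofReal_coe_nnreal] at h
  simp only [nrmE, EReal.coe_ennreal_mul]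
  exact h

theorem nrmE_tsum_le (h : ℕ → P → ℝ≥0∞) :
    X.nrmE (fun x => ∑' k, h k x) ≤ ∑' k, X.cc ^ (k + 1) * X.nrmE (h k) := by
  simpa only [nrmE, ereal_coe_ennreal_tsum] using
    X.nrm_rieszFischer (fun k x => (h k x : EReal))
      (fun k => Eventually.of_forall fun x => EReal.coe_ennreal_nonneg _)

/-- The function `∞ · 1_{w = ∞}` equals its double and has finite quasi-norm, hence quasi-norm
zero. -/
theorem ae_ne_top {w : P → ℝ≥0∞} (hw : Measurable w) (hfin : X.nrmE w < ⊤) :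
    ∀ᵐ x ∂μ, w x ≠ ⊤ := by
  let φ : P → ℝ≥0∞ := {x | w x = ⊤}.indicator fun _ => ⊤
  have hφ_meas : Measurable φ := measurable_const.indicator (hw (measurableSet_singleton ⊤))
  have hφ_le : X.nrmE φ ≤ X.nrmE w :=
    X.nrmE_mono (Eventually.of_forall (indicator_le fun _ hx => hx.ge))
  have hφ_double : (fun x => 2 * φ x) = φ := by
    funext x
    by_cases hx : w x = ⊤ <;> simp [φ, hx]
  have hφ_zero : X.nrmE φ = 0 := by
    have h := X.nrmE_const_mul ofNat_ne_top φ (a := 2)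
    rw [hφ_double, two_mul] at h
    by_contra h0
    exact (ENNReal.lt_add_right (hφ_le.trans_lt hfin).ne h0).ne h
  filter_upwards [(X.nrm_eq_zero_iff _ (measurable_coe_ennreal_ereal.comp hφ_meas)).1 hφ_zero]
    with x hx hwx
  simp [φ, hwx] at hx

end QuasiNorm

variable (X : QBFL P μ)

section Capacity

theorem newt_le {v : P → EReal} {g : P → ℝ≥0∞} (hg : IsUpperGradient v g) :
    X.newt v ≤ X.nrm v + X.nrmE g :=
  add_le_add_right (iInf₂_le g hg) _

theorem exists_isUpperGradient_lt {v : P → EReal} {a : ℝ≥0∞} (h : X.newt v < a) :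
    ∃ g, IsUpperGradient v g ∧ X.nrm v + X.nrmE g < a := by
  by_contra! hle
  exact h.not_ge (tsub_le_iff_left.1 (le_iInf₂ fun g hg => tsub_le_iff_left.2 (hle g hg)))

theorem cap_mono {E F : Set P} (h : E ⊆ F) : X.cap E ≤ X.cap F :=
  biInf_mono fun _ hw => ⟨hw.1, fun x hx => hw.2 x (h hx)⟩

theorem cap_le_of_upperGradientPair {E : Set P} {w g : P → ℝ≥0∞} (h : UpperGradientPair w g)
    (hE : ∀ x ∈ E, 1 ≤ w x) : X.cap E ≤ X.nrmE w + X.nrmE g := by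
  rcases eq_top_or_lt_top (X.nrmE w + X.nrmE g) with htop | hfin
  · exact htop ▸ le_top
  let v : P → EReal := fun x => (min 1 (w x) : ℝ≥0∞)
  have hnewt : X.newt v ≤ X.nrmE w + X.nrmE g :=
    (X.newt_le h.isUpperGradient_min_one).trans <|
      add_le_add_left (X.nrmE_mono (Eventually.of_forall fun _ => min_le_right _ _)) _
  have hv : Measurable v :=
    measurable_coe_ennreal_ereal.comp (measurable_const.min h.measurable_fun)
  have hvE : ∀ x ∈ E, 1 ≤ v x := fun x hx =>
    EReal.coe_ennreal_le_coe_ennreal_iff.2 (le_min le_rfl (hE x hx))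
  exact iInf₂_le_of_le v ⟨⟨hv, hnewt.trans_lt hfin⟩, hvE⟩ hnewt

theorem exists_upperGradientPair_of_cap_lt {E : Set P} {a : ℝ≥0∞} (h : X.cap E < a) :
    ∃ w g, UpperGradientPair w g ∧ (∀ x ∈ E, 1 ≤ w x) ∧ X.nrmE w + X.nrmE g < a := by
  simp only [cap, iInf_lt_iff] at h
  obtain ⟨v, ⟨⟨hv, -⟩, hvE⟩, hnewt⟩ := h
  obtain ⟨g, hg, hlt⟩ := X.exists_isUpperGradient_lt hnewt
  refine ⟨_, g, hg.upperGradientPair_abs hv, fun x hx => ?_, by rwa [X.nrmE_abs]⟩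
  exact le_ereal_abs_of_coe_le (EReal.coe_ennreal_one.trans_le (hvE x hx))

theorem exists_upperGradientPair_seq {E : ℕ → Set P} (hE : ∀ k, X.cap (E k) ≠ ⊤) {ε : ℝ≥0∞}
    (hε : ε ≠ 0) :
    ∃ w g : ℕ → P → ℝ≥0∞, (∀ k, UpperGradientPair (w k) (g k)) ∧
      (∀ k, ∀ x ∈ E k, 1 ≤ w k x) ∧
      X.nrmE (fun x => ∑' k, w k x) + X.nrmE (fun x => ∑' k, g k x) ≤
        ∑' k, X.cc ^ (k + 1) * X.cap (E k) + ε := by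
  obtain ⟨δ, hδ, hδε⟩ := ENNReal.exists_pos_tsum_mul_lt_of_countable hε
    (fun k => X.cc ^ (k + 1)) (fun k => ENNReal.pow_ne_top X.cc_lt_top.ne)
  choose w g hpair hwE hlt using fun k => X.exists_upperGradientPair_of_cap_lt
    (ENNReal.lt_add_right (hE k) (ENNReal.coe_ne_zero.2 (hδ k).ne'))
  refine ⟨w, g, hpair, hwE, ?_⟩
  calc X.nrmE (fun x => ∑' k, w k x) + X.nrmE (fun x => ∑' k, g k x)
      ≤ ∑' k, X.cc ^ (k + 1) * X.nrmE (w k) + ∑' k, X.cc ^ (k + 1) * X.nrmE (g k) :=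
        add_le_add (X.nrmE_tsum_le w) (X.nrmE_tsum_le g)
    _ = ∑' k, X.cc ^ (k + 1) * (X.nrmE (w k) + X.nrmE (g k)) := by
        simp only [mul_add, ENNReal.tsum_add]
    _ ≤ ∑' k, X.cc ^ (k + 1) * (X.cap (E k) + δ k) := by
        exact ENNReal.tsum_le_tsum fun k => mul_le_mul' le_rfl (hlt k).le
    _ ≤ ∑' k, X.cc ^ (k + 1) * X.cap (E k) + ε := by
        simp only [mul_add, ENNReal.tsum_add]
        gcongr

theorem cap_iUnion_le (E : ℕ → Set P) :
    X.cap (⋃ k, E k) ≤ ∑' k, X.cc ^ (k + 1) * X.cap (E k) := by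
  by_cases hE : ∀ k, X.cap (E k) ≠ ⊤
  · refine ENNReal.le_of_forall_pos_le_add fun ε hε _ => ?_
    obtain ⟨w, g, hpair, hwE, hle⟩ :=
      X.exists_upperGradientPair_seq hE (ENNReal.coe_ne_zero.2 hε.ne')
    refine (X.cap_le_of_upperGradientPair (.tsum hpair) fun x hx => ?_).trans hle
    obtain ⟨k, hk⟩ := mem_iUnion.1 hx
    exact (hwE k x hk).trans (ENNReal.le_tsum k)
  · push Not at hE
    obtain ⟨k, hk⟩ := hE
    have hcc : X.cc ^ (k + 1) ≠ 0 := (zero_lt_one.trans_le (one_le_pow₀ X.one_le_cc)).ne'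
    refine le_top.trans (le_trans ?_ (ENNReal.le_tsum k))
    rw [hk, ENNReal.mul_top hcc]

theorem cap_le_abs_le {v : P → EReal} (hv : Measurable v) {t : ℝ≥0∞} (ht0 : t ≠ 0)
    (ht : t ≠ ⊤) : X.cap {x | t ≤ (v x).abs} ≤ t⁻¹ * X.newt v := by
  have htinv : t⁻¹ ≠ ⊤ := ENNReal.inv_ne_top.2 ht0
  refine (ENNReal.mul_le_iff_le_inv ht0 ht).1 (le_of_forall_gt fun a ha => ?_)
  obtain ⟨g, hg, hlt⟩ := X.exists_isUpperGradient_lt ha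
  refine lt_of_le_of_lt ((ENNReal.mul_le_iff_le_inv ht0 ht).2 ?_) hlt
  rw [mul_add, ← X.nrmE_abs, ← X.nrmE_const_mul htinv, ← X.nrmE_const_mul htinv]
  refine X.cap_le_of_upperGradientPair ((hg.upperGradientPair_abs hv).const_mul t⁻¹) fun x hx => ?_
  exact (ENNReal.inv_mul_cancel ht0 ht).ge.trans (mul_le_mul_right hx _)

end Capacity

section QuasiEverywhere

theorem exists_upperGradientPair_eq_top_of_cap_eq_zero {E : Set P} (hE : X.cap E = 0) :
    ∃ w g, UpperGradientPair w g ∧ X.nrmE w < ⊤ ∧ X.nrmE g < ⊤ ∧ ∀ x ∈ E, w x = ⊤ := by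
  obtain ⟨w, g, hpair, hwE, hle⟩ :=
    X.exists_upperGradientPair_seq (E := fun _ => E) (by simp [hE]) one_ne_zero
  have hfin : X.nrmE (fun x => ∑' k, w k x) + X.nrmE (fun x => ∑' k, g k x) < ⊤ :=
    hle.trans_lt (by simp [hE])
  refine ⟨_, _, .tsum hpair, (ENNReal.add_lt_top.1 hfin).1, (ENNReal.add_lt_top.1 hfin).2, ?_⟩
  intro x hx
  refine top_le_iff.1 ?_
  calc (⊤ : ℝ≥0∞) = ∑' _ : ℕ, 1 := (ENNReal.tsum_const_eq_top_of_ne_zero one_ne_zero).symm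
    _ ≤ ∑' k, w k x := ENNReal.tsum_le_tsum fun k => hwE k x hx

theorem ae_notMem_of_cap_eq_zero {E : Set P} (hE : X.cap E = 0) : ∀ᵐ x ∂μ, x ∉ E := by
  obtain ⟨w, g, hpair, hw, -, hwE⟩ := X.exists_upperGradientPair_eq_top_of_cap_eq_zero hE
  filter_upwards [X.ae_ne_top hpair.measurable_fun hw] with x hx hxE
  exact hx (hwE x hxE)

theorem exists_curveLint_eq_top_of_cap_eq_zero {E : Set P} (hE : X.cap E = 0) :
    ∃ ρ : P → ℝ≥0∞, Measurable ρ ∧ X.nrmE ρ < ⊤ ∧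
      ∀ γ : Curve P, γ.toFun 0 ∈ E ∨ γ.toFun γ.len ∈ E → curveLint γ ρ = ⊤ := by
  obtain ⟨w, g, hpair, hw, hg, hwE⟩ := X.exists_upperGradientPair_eq_top_of_cap_eq_zero hE
  refine ⟨fun x => g x + {y | w y = ⊤}.indicator (fun _ => ⊤) x, ?_, ?_, ?_⟩
  · exact hpair.measurable_grad.add <|
      measurable_const.indicator (hpair.measurable_fun (measurableSet_singleton ⊤))
  · refine (X.nrmE_mono ?_).trans_lt hg
    filter_upwards [X.ae_ne_top hpair.measurable_fun hw] with x hx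
    simp [hx]
  · rintro γ (h0 | hlen)
    · exact hpair.curveLint_eq_top γ (hwE _ h0)
    · rw [← curveLint_reverse]
      exact hpair.curveLint_eq_top γ.reverse (hwE _ (γ.reverse_zero ▸ hlen))

theorem memN1_of_cap_ne_eq_zero {u v : P → EReal} (hu : X.memN1 u) (hv : Measurable v)
    (h : X.cap {x | v x ≠ u x} = 0) : X.memN1 v := by
  obtain ⟨g, hg, hfin⟩ := X.exists_isUpperGradient_lt hu.2
  obtain ⟨hu_fin, hg_fin⟩ := ENNReal.add_lt_top.1 hfin
  obtain ⟨ρ, hρ, hρ_fin, hρ_top⟩ := X.exists_curveLint_eq_top_of_cap_eq_zero h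
  have hnrm : X.nrm v ≤ X.nrm u := by
    refine X.nrm_mono _ _ ?_
    filter_upwards [X.ae_notMem_of_cap_eq_zero h] with x hx
    rw [not_not.1 hx]
  have hgrad : X.nrmE (fun x => g x + ρ x) < ⊤ :=
    (X.nrmE_add_le g ρ).trans_lt
      (ENNReal.mul_lt_top X.cc_lt_top (ENNReal.add_lt_top.2 ⟨hg_fin, hρ_fin⟩))
  exact ⟨hv, (X.newt_le (hg.congr_of_curveLint_eq_top hρ hρ_top)).trans_lt
    (ENNReal.add_lt_top.2 ⟨hnrm.trans_lt hu_fin, hgrad⟩)⟩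

end QuasiEverywhere

section QuasiUniformConvergence

/-- Quasi-uniform convergence of real functions `f k` to `u`: for every `ε > 0`, off a set of
capacity less than `ε`, the function `u` is real-valued and `f k → u` uniformly. Finiteness of `u`
is expressed by `u` being the coercion of its real part, as `EReal.toReal` sends `±∞` to `0`. -/
def TendstoQuasiUniformly (f : ℕ → P → ℝ) (u : P → EReal) : Prop :=
  ∀ ε : ℝ≥0∞, 0 < ε → ∃ E : Set P, X.cap E < ε ∧
    (∀ x ∈ Eᶜ, ((u x).toReal : EReal) = u x) ∧
      TendstoUniformlyOn f (fun x => (u x).toReal) atTop Eᶜ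

theorem exists_cap_lt_forall_abs_le {v : ℕ → P → EReal} (hv : ∀ k, Measurable (v k))
    {t : ℕ → ℝ≥0∞} (ht0 : ∀ k, t k ≠ 0) (ht : ∀ k, t k ≠ ⊤)
    (hsum : ∑' k, X.cc ^ (k + 1) * ((t k)⁻¹ * X.newt (v k)) ≠ ⊤) {ε : ℝ≥0∞} (hε : 0 < ε) :
    ∃ E : Set P, X.cap E < ε ∧ ∀ᶠ k in atTop, ∀ x ∈ Eᶜ, (v k x).abs ≤ t k := by
  obtain ⟨n, hn⟩ :=
    ((ENNReal.tendsto_sum_nat_add _ hsum).eventually (gt_mem_nhds hε)).exists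
  refine ⟨⋃ j, {x | t (j + n) ≤ (v (j + n) x).abs}, lt_of_le_of_lt ?_ hn, ?_⟩
  · refine (X.cap_iUnion_le _).trans (ENNReal.tsum_le_tsum fun j => ?_)
    exact mul_le_mul' (pow_le_pow_right₀ X.one_le_cc (by omega))
      (X.cap_le_abs_le (hv _) (ht0 _) (ht _))
  · filter_upwards [eventually_ge_atTop n] with k hk x hx
    obtain ⟨j, rfl⟩ := Nat.exists_eq_add_of_le' hk
    exact (not_le.1 fun h => hx (mem_iUnion.2 ⟨j, h⟩)).le

theorem exists_continuous_tendstoQuasiUniformly [OpensMeasurableSpace P] {u : P → EReal}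
    (hu : Measurable u)
    (hdens : ∀ ε : ℝ≥0∞, 0 < ε → ∃ f : P → ℝ, Continuous f ∧ X.newt (fun x => u x - f x) < ε) :
    ∃ f : ℕ → P → ℝ, (∀ k, Continuous (f k)) ∧ X.TendstoQuasiUniformly f u := by
  obtain ⟨δ, hδ, hδ_sum⟩ := ENNReal.exists_pos_tsum_mul_lt_of_countable one_ne_zero
    (fun k => X.cc ^ (k + 1) * (2⁻¹ ^ k)⁻¹)
    (fun k => ENNReal.mul_ne_top (ENNReal.pow_ne_top X.cc_lt_top.ne) (by simp))
  choose f hf hfδ using fun k => hdens (δ k) (ENNReal.coe_pos.2 (hδ k))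
  have hv (k : ℕ) : Measurable fun x => u x - f k x := by
    simp only [sub_eq_add_neg]
    exact hu.add (measurable_coe_real_ereal.comp (hf k).measurable).neg
  have hsum : ∑' k, X.cc ^ (k + 1) * ((2⁻¹ ^ k)⁻¹ * X.newt (fun x => u x - f k x)) ≠ ⊤ := by
    refine ((ENNReal.tsum_le_tsum fun k => ?_).trans_lt (hδ_sum.trans one_lt_top)).ne
    rw [← mul_assoc]
    gcongr
    exact (hfδ k).le
  refine ⟨f, hf, fun ε hε => ?_⟩
  obtain ⟨E, hE, hle⟩ :=
    X.exists_cap_lt_forall_abs_le hv (t := fun k => 2⁻¹ ^ k) (by simp) (by simp) hsum hε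
  exact ⟨E, hE, tendstoUniformlyOn_toReal
    (ENNReal.tendsto_pow_atTop_nhds_zero_of_lt_one (by simp)) hle⟩

namespace TendstoQuasiUniformly

variable {X} {f : ℕ → P → ℝ} {u : P → EReal}

theorem weaklyQC (h : X.TendstoQuasiUniformly f u) (hf : ∀ k, Continuous (f k)) :
    X.WeaklyQC u := fun ε hε =>
  have ⟨E, hE, hfinite, hunif⟩ := h ε hε
  have hcont := hunif.continuousOn (Frequently.of_forall fun k => (hf k).continuousOn)
  ⟨E, hE, ereal_finite_and_continuousOn hcont fun x hx => (hfinite x hx).symm⟩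

theorem qc_upperLimit (h : X.TendstoQuasiUniformly f u) (hf : ∀ k, Continuous (f k)) :
    X.QC (upperLimit f) := fun ε hε => by
  obtain ⟨E, hE, -, hunif⟩ := h ε hε
  have hcauchy := uniformCauchySeqOn_closure hf hunif.uniformCauchySeqOn
  rw [closure_compl] at hcauchy
  obtain ⟨F, hF, hlim⟩ := exists_continuousOn_upperLimit_eq hf hcauchy
  exact ⟨interior E, isOpen_interior, (X.cap_mono interior_subset).trans_lt hE,
    ereal_finite_and_continuousOn hF hlim⟩

theorem cap_upperLimit_ne_eq_zero (h : X.TendstoQuasiUniformly f u) :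
    X.cap {x | upperLimit f x ≠ u x} = 0 := by
  refine nonpos_iff_eq_zero.1 (le_of_forall_gt fun ε hε => ?_)
  obtain ⟨E, hE, hfinite, hunif⟩ := h ε hε
  refine (X.cap_mono fun x hx => ?_).trans_lt hE
  by_contra hxE
  exact hx ((upperLimit_eq_of_tendsto (hunif.tendsto_at hxE)).trans (hfinite x hxE))

end TendstoQuasiUniformly

end QuasiUniformConvergence

end QBFL

theorem newtonian_has_qc_representative_general [OpensMeasurableSpace P] (X : QBFL P μ)
    {u : P → EReal} (hu : X.memN1 u)
    (hdens : ∀ ε : ℝ≥0∞, 0 < ε → ∃ f : P → ℝ, Continuous f ∧ X.newt (fun x => u x - f x) < ε) :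
    (∃ ut : P → EReal, X.memN1 ut ∧ X.QC ut ∧ X.cap {x | ut x ≠ u x} = 0) ∧ X.WeaklyQC u := by
  obtain ⟨f, hf, hlim⟩ := X.exists_continuous_tendstoQuasiUniformly hu.1 hdens
  have hqe : X.cap {x | upperLimit f x ≠ u x} = 0 := hlim.cap_upperLimit_ne_eq_zero
  have hmem : X.memN1 (upperLimit f) :=
    X.memN1_of_cap_ne_eq_zero hu (measurable_upperLimit fun k => (hf k).measurable) hqe
  exact ⟨⟨upperLimit f, hmem, hlim.qc_upperLimit hf, hqe⟩, hlim.weaklyQC hf⟩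

/-- If continuous (real-valued) functions are dense in `N¹X`, then every
`u ∈ N¹X` has a quasi-continuous representative `ũ = u` q.e.; in particular every `u ∈ N¹X`
is weakly quasi-continuous. -/
theorem newtonian_has_qc_representative
    {P : Type*} [MetricSpace P] [MeasurableSpace P] [BorelSpace P]
    (μ : MeasureTheory.Measure P) [SigmaFinite μ]
    (hball : ∀ (x : P) (r : ℝ), 0 < r → 0 < μ (Metric.ball x r) ∧ μ (Metric.ball x r) < ⊤)
    (X : QBFL P μ)
    (hdens : ∀ u : P → EReal, X.memN1 u → ∀ ε : ℝ≥0∞, 0 < ε →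
      ∃ f : P → ℝ, Continuous f ∧ X.newt (fun x => u x - (f x : EReal)) < ε)
    (u : P → EReal) (hu : X.memN1 u) :
    (∃ ut : P → EReal, X.memN1 ut ∧ X.QC ut ∧ X.cap {x | ut x ≠ u x} = 0) ∧
      X.WeaklyQC u :=
  newtonian_has_qc_representative_general X hu (hdens u hu)

end
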